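/- Let K ⊆ ℝ² be a convex body, C ⊆ ℝ² a 0-symmetric convex body, and suppose K is pseudo-complete with respect to C. Then D(K,C)/w(K,C) ≤ ((s(K)+1)/2)·c(s(K)). -/

import Mathlib

open scoped Pointwise RealInnerProductSpace
open Set

noncomputable section

abbrev E2 := EuclideanSpace ℝ (Fin 2)

/-- A convex body: compact convex set with nonempty interior. -/
def IsConvexBody (K : Set E2) : Prop :=
  Convex ℝ K ∧ IsCompact K ∧ (interior K).Nonempty

/-- circumradius `R(K,C)` -/
def circum (K C : Set E2) : ℝ :=
  sInf {ρ : ℝ | 0 < ρ ∧ ∃ t : E2, K ⊆ ρ • C + {t}}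

/-- inradius `r(K,C)` -/
def inrad (K C : Set E2) : ℝ :=
  sSup {ρ : ℝ | 0 < ρ ∧ ∃ t : E2, ρ • C + {t} ⊆ K}

/-- width `w(K,C)` -/
def widthB (K C : Set E2) : ℝ := 2 * inrad (K - K) (C - C)

/-- diameter `D(K,C)` -/
def diamB (K C : Set E2) : ℝ := 2 * circum (K - K) (C - C)

/-- Minkowski asymmetry `s(K)` -/
def minkAsym (K : Set E2) : ℝ :=
  sInf {ρ : ℝ | 0 < ρ ∧ ∃ c : E2, K - {c} ⊆ ρ • ({c} - K)}

/-- `K` is Minkowski centered -/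
def MinkCentered (K : Set E2) : Prop := K ⊆ minkAsym K • (-K)

/-- `τ(K)`: smallest `ρ > 0` with `K ∩ (-K) ⊆ ρ • ((K-K)/2)` -/
def tauB (K : Set E2) : ℝ :=
  sInf {ρ : ℝ | 0 < ρ ∧ K ∩ (-K) ⊆ ρ • ((2:ℝ)⁻¹ • (K - K))}

/-- golden ratio -/
def phiR : ℝ := (1 + Real.sqrt 5) / 2

def cExpr2 (s : ℝ) : ℝ :=
  (s^2+1)^2 / ((s^2-1) * (s^2+2*s-1+2*Real.sqrt (s*(s^2-1))))

def cExpr3 (s : ℝ) : ℝ := 2*(s^2-2*s-1) / ((s-3)*(s+1))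

/-- `ŝ`: the unique `s ∈ (φ,2)` where the two expressions agree. -/
def sHat : ℝ := sInf {s : ℝ | phiR < s ∧ s < 2 ∧ cExpr2 s = cExpr3 s}

def cFun (s : ℝ) : ℝ :=
  if s ≤ phiR then 1 else if s ≤ sHat then cExpr2 s else cExpr3 s

/-- polar body -/
def polarBody (K : Set E2) : Set E2 := {y | ∀ x ∈ K, (inner ℝ x y : ℝ) ≤ 1}

/-- `γ(K)` -/
def gammaB (K : Set E2) : ℝ :=
  sInf {ρ : ℝ | 0 < ρ ∧
    polarBody ((2:ℝ)⁻¹ • (polarBody K - polarBody K)) ⊆ ρ • convexHull ℝ (K ∪ -K)}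

/-- positive hull of two points -/
def posHull2 (a b : E2) : Set E2 := {x | ∃ α β : ℝ, 0 ≤ α ∧ 0 ≤ β ∧ x = α • a + β • b}

/-- asymmetry point of `K`: a point of `bd(K) ∩ bd(−(1/s(K))·K)` -/
def IsAsymPoint (K : Set E2) (p : E2) : Prop :=
  p ∈ frontier K ∧ p ∈ frontier ((-(minkAsym K)⁻¹) • K)

/-- a well-spread triple of asymmetry points -/
def WellSpread (K : Set E2) (p1 p2 p3 : E2) : Prop :=
  IsAsymPoint K p1 ∧ IsAsymPoint K p2 ∧ IsAsymPoint K p3 ∧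
  ∃ a1 a2 a3 : E2, a1 ≠ 0 ∧ a2 ≠ 0 ∧ a3 ≠ 0 ∧
    (∀ x ∈ K, (inner ℝ a1 x : ℝ) ≤ inner ℝ a1 p1) ∧
    (∀ x ∈ K, (inner ℝ a2 x : ℝ) ≤ inner ℝ a2 p2) ∧
    (∀ x ∈ K, (inner ℝ a3 x : ℝ) ≤ inner ℝ a3 p3) ∧
    (0:E2) ∈ interior (convexHull ℝ {p1, p2, p3}) ∧
    (0:E2) ∈ convexHull ℝ {a1, a2, a3}

/-- two points of `bd(K) ∩ bd(-K)` are consecutive -/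
def Consecutive (K : Set E2) (z1 z2 : E2) : Prop :=
  ¬ ∃ z, z ∈ frontier K ∩ frontier (-K) ∧ z ∈ interior (posHull2 z1 z2)

/-- point of the plane from coordinates -/
def pt (x y : ℝ) : E2 := (WithLp.equiv 2 (Fin 2 → ℝ)).symm ![x, y]

/-- the golden house -/
def goldenHouse : Set E2 :=
  convexHull ℝ {pt 1 0, pt (-1) 0, pt 1 (-1), pt (-1) (-1), pt 0 phiR}



theorem key_half (s c l1 l2 l3 : ℝ) (hs : 1 < s) (h1 : l1 ≤ 1) (h2 : l2 ≤ 1) (h3 : l3 ≤ 1)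
    (hl : l1 + l2 + l3 = s + 1) (hc1 : 2 ≤ c * (s+1))
    (hG : ∀ z : ℝ, s - 1 ≤ z → z ≤ 1 →
      0 ≤ 2*s*z^2 - z*(s^2+1+(s^2-1)*c) + (s+1)^2*(s-1)*c/2) :
    0 ≤ (s+1)*(s+1-2*l3)*((l1+l3-1)*c/2 - l3) + l3*(2*l1 - (s+1)*(1-l2)) := by
  have hz := hG l3 (by linarith) h3
  have e : (s+1)*(s+1-2*l3)*((l1+l3-1)*c/2 - l3) + l3*(2*l1 - (s+1)*(1-l2))
    = (2*s*l3^2 - l3*(s^2+1+(s^2-1)*c) + (s+1)^2*(s-1)*c/2)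
      + (1-l2) * ((c*(s+1)) * (s+1-2*l3)/2 - l3*(s-1)) := by
    have : l1 = s + 1 - l2 - l3 := by linarith
    subst this; ring
  rw [e]
  have : 0 ≤ (c*(s+1)) * (s+1-2*l3)/2 - l3*(s-1) := by
    have : 2 * (s+1-2*l3) ≤ (c*(s+1)) * (s+1-2*l3) :=
      mul_le_mul_of_nonneg_right hc1 (by linarith)
    nlinarith
  have := mul_nonneg (sub_nonneg.2 h2) this
  linarith

theorem key_case1 (s c l1 l2 l3 x y m : ℝ) (hs : 1 < s) (h1 : l1 ≤ 1) (h2 : l2 ≤ 1) (h3 : l3 ≤ 1)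
    (hl : l1 + l2 + l3 = s + 1) (p1 : 0 < l1) (p2 : 0 < l2) (p3 : 0 < l3)
    (hx : 0 ≤ x) (hc2 : c ≤ 2) (hc0 : 0 < c)
    (hG : 0 ≤ (s+1)*(s+1-2*l3)*((l1+l3-1)*c/2 - l3) + l3*(2*l1 - (s+1)*(1-l2)))
    (hm : m * ((s+1)*l2) = x*l1*(s+1-2*l3) + y*l3*(s+1-2*l1))
    (hW : l3*y - (1-l3)*x ≤ m) : m ≤ c/2 * ((l1*x - (1-l1)*y) + m) := by
  have hL : 0 < (s+1)*l2 := by positivity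
  have hM : 0 < l3*(2*l1 - (s+1)*(1-l2)) := by
    apply mul_pos p3
    have : s - l2 ≤ l1 := by linarith
    nlinarith
  set M := l3*(2*l1 - (s+1)*(1-l2)) with hMd
  set N := l1*(s+1-2*l3) + (1-l3)*((s+1)*l2) with hNd
  have hWN : y*M ≤ x*N := by
    have := mul_le_mul_of_nonneg_right hW hL.le
    rw [hm] at this
    have e : x*N - y*M = (x*l1*(s+1-2*l3) + y*l3*(s+1-2*l1)) - (l3*y - (1-l3)*x)*((s+1)*l2) := by
      have : l1 = s + 1 - l2 - l3 := by linarith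
      rw [hMd, hNd]; subst this; ring
    linarith
  have hMN : M + N = (s+1)*(s+1-2*l3) := by
    have : l1 = s + 1 - l2 - l3 := by linarith
    rw [hMd, hNd]; subst this; ring
  -- h * (L l2) * M ≥ 0
  have hy : 0 ≤ (c/2)*((1-l1)*((s+1)*l2)) + (1-c/2)*(l3*(s+1-2*l1)) := by
    have := mul_nonneg (sub_nonneg.2 h1) hL.le
    have := mul_nonneg p3.le (by linarith : 0 ≤ s+1-2*l1)
    have : 0 ≤ 1 - c/2 := by linarith
    positivity
  have key : 0 ≤ (c/2 * ((l1*x - (1-l1)*y) + m) - m) * ((s+1)*l2) * M := by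
    have e1 : (c/2 * ((l1*x - (1-l1)*y) + m) - m) * ((s+1)*l2) * M
        = ((c/2)*l1*((s+1)*l2) - (1-c/2)*(l1*(s+1-2*l3))) * (x*M)
         - ((c/2)*((1-l1)*((s+1)*l2)) + (1-c/2)*(l3*(s+1-2*l1))) * (y*M) := by
      have : (c/2 * ((l1*x - (1-l1)*y) + m) - m) * ((s+1)*l2) * M
       = ((c/2) * (l1*x - (1-l1)*y) * ((s+1)*l2) - (1-c/2)*(m*((s+1)*l2))) * M := by ring
      rw [this, hm]; ring
    have e2 : ((c/2)*l1*((s+1)*l2) - (1-c/2)*(l1*(s+1-2*l3))) * (x*M)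
         - ((c/2)*((1-l1)*((s+1)*l2)) + (1-c/2)*(l3*(s+1-2*l1))) * (x*N)
         = x * ((s+1)*l2) * ((s+1)*(s+1-2*l3)*((l1+l3-1)*c/2 - l3) + M) := by
      have : l1 = s + 1 - l2 - l3 := by linarith
      rw [hMd, hNd]; subst this; ring
    have e3 := mul_le_mul_of_nonneg_left hWN hy
    have e4 := mul_nonneg (mul_nonneg hx hL.le) hG
    rw [e1]; linarith
  have := nonneg_of_mul_nonneg_left key hM
  have := nonneg_of_mul_nonneg_left this hL
  linarith

theorem key (s c l1 l2 l3 x y m A B : ℝ) (hs : 1 < s) (h1 : l1 ≤ 1) (h2 : l2 ≤ 1) (h3 : l3 ≤ 1)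
    (hl : l1 + l2 + l3 = s + 1) (hx : 0 ≤ x) (hy : 0 ≤ y)
    (hc2 : c ≤ 2) (hc1 : 2 ≤ c * (s+1))
    (hG : ∀ z : ℝ, s - 1 ≤ z → z ≤ 1 →
      0 ≤ 2*s*z^2 - z*(s^2+1+(s^2-1)*c) + (s+1)^2*(s-1)*c/2)
    (hm : m * ((s+1)*l2) = x*l1*(s+1-2*l3) + y*l3*(s+1-2*l1))
    (hU : l1*x - (1-l1)*y ≤ A) (hW : l3*y - (1-l3)*x ≤ B) (hA : m ≤ A) (hB : m ≤ B) :
    m ≤ c/2 * (A + B) := by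
  have p1 : 0 < l1 := by linarith
  have p2 : 0 < l2 := by linarith
  have p3 : 0 < l3 := by linarith
  have hc0 : 0 < c := by
    by_contra h; nlinarith
  have G1 := key_half s c l1 l2 l3 hs h1 h2 h3 hl hc1 hG
  have G3 := key_half s c l3 l2 l1 hs h3 h2 h1 (by linarith) hc1 hG
  by_cases c1 : l3*y - (1-l3)*x ≤ m
  · have := key_case1 s c l1 l2 l3 x y m hs h1 h2 h3 hl p1 p2 p3 hx hc2 hc0 G1 hm c1
    have : c/2*((l1*x - (1-l1)*y) + m) ≤ c/2*(A+B) :=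
      mul_le_mul_of_nonneg_left (by linarith) (by linarith)
    linarith
  by_cases c3 : l1*x - (1-l1)*y ≤ m
  · have := key_case1 s c l3 l2 l1 y x m hs h3 h2 h1 (by linarith) p3 p2 p1 hy hc2 hc0 G3
      (by linarith) c3
    have : c/2*((l3*y - (1-l3)*x) + m) ≤ c/2*(A+B) :=
      mul_le_mul_of_nonneg_left (by linarith) (by linarith)
    linarith
  push Not at c1 c3
  suffices h : m ≤ c/2 * ((l1*x - (1-l1)*y) + (l3*y - (1-l3)*x)) by
    have : c/2 * ((l1*x - (1-l1)*y) + (l3*y - (1-l3)*x)) ≤ c/2*(A+B) :=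
      mul_le_mul_of_nonneg_left (by linarith) (by linarith)
    linarith
  have hL : 0 < (s+1)*l2 := by positivity
  -- scaled
  set fx := (c/2)*(l1+l3-1)*((s+1)*l2) - l1*(s+1-2*l3) with hfx
  set fy := (c/2)*(l1+l3-1)*((s+1)*l2) - l3*(s+1-2*l1) with hfy
  have hf : (c/2 * ((l1*x - (1-l1)*y) + (l3*y - (1-l3)*x)) - m) * ((s+1)*l2) = fx*x + fy*y := by
    rw [sub_mul, hm, hfx, hfy]; ring
  suffices h : 0 ≤ fx*x + fy*y by
    rw [← hf] at h
    have := nonneg_of_mul_nonneg_left h hL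
    linarith
  have el1 : l1 = s + 1 - l2 - l3 := by linarith
  rcases le_total 0 fy with h | h
  · have hM : 0 < l3*(2*l1 - (s+1)*(1-l2)) := by
      apply mul_pos p3
      have : s - l2 ≤ l1 := by linarith
      nlinarith
    set M := l3*(2*l1 - (s+1)*(1-l2)) with hMd
    set N := l1*(s+1-2*l3) + (1-l3)*((s+1)*l2) with hNd
    have hWN : x*N ≤ y*M := by
      have := mul_le_mul_of_nonneg_right c1.le hL.le
      rw [hm] at this
      have e : x*N - y*M = (x*l1*(s+1-2*l3) + y*l3*(s+1-2*l1)) - (l3*y - (1-l3)*x)*((s+1)*l2) := by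
        rw [hMd, hNd]; clear_value fx fy; subst el1; ring
      linarith
    have e2 : fx*M + fy*N = ((s+1)*l2) * ((s+1)*(s+1-2*l3)*((l1+l3-1)*c/2 - l3) + M) := by
      rw [hMd, hNd, hfx, hfy, el1]; ring
    have e3 := mul_le_mul_of_nonneg_left hWN h
    have e4 := mul_nonneg hx (mul_nonneg hL.le G1)
    rw [← e2] at e4
    have : 0 ≤ (fx*x+fy*y)*M := by linarith
    exact nonneg_of_mul_nonneg_left this hM
  · set M := l1*(2*l3 - (s+1)*(1-l2)) with hMd
    have hN : 0 < l3*(s+1-2*l1) + (1-l1)*((s+1)*l2) := by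
      have := mul_pos p3 (by linarith : 0 < s+1-2*l1)
      have := mul_nonneg (sub_nonneg.2 h1) hL.le
      linarith
    set N := l3*(s+1-2*l1) + (1-l1)*((s+1)*l2) with hNd
    have hWN : y*N ≤ x*M := by
      have := mul_le_mul_of_nonneg_right c3.le hL.le
      rw [hm] at this
      have e : y*N - x*M = (x*l1*(s+1-2*l3) + y*l3*(s+1-2*l1)) - (l1*x - (1-l1)*y)*((s+1)*l2) := by
        rw [hMd, hNd, el1]; ring
      linarith
    have e2 : fx*N + fy*M = ((s+1)*l2) * ((s+1)*(s+1-2*l1)*((l3+l1-1)*c/2 - l1) + M) := by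
      rw [hMd, hNd, hfx, hfy, el1]; ring
    have e3 := mul_le_mul_of_nonpos_left hWN h
    have e4 := mul_nonneg hx (mul_nonneg hL.le G3)
    rw [← e2] at e4
    have : 0 ≤ (fx*x+fy*y)*N := by linarith
    exact nonneg_of_mul_nonneg_left this hN

theorem core_sorted (s c k1 k2 k3 v1 v2 v3 z1 z2 z3 t2 t3 r1 r2 m A B : ℝ) (hs : 1 < s)
    (hk : k1 + k2 + k3 = 1) (p1 : 0 ≤ k1) (p2 : 0 ≤ k2) (p3 : 0 ≤ k3)
    (h12 : v2 ≤ v1) (h23 : v3 ≤ v2)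
    (hv : k1*v1 + k2*v2 + k3*v3 = 0)
    (hz : k1*z1 + k2*z2 + k3*z3 = 0) (hz1 : -1 ≤ z1) (hz3 : z3 ≤ 1)
    (hm : m = -(k1*v1*z1 + k2*v2*z2 + k3*v3*z3))
    (hl1 : (s+1)*k1 ≤ 1) (hl2 : (s+1)*k2 ≤ 1) (hl3 : (s+1)*k3 ≤ 1)
    (ht : -s*k1 + k2*t2 + k3*t3 = 0) (ht2 : t2 ≤ 1)
    (hr : k1*r1 + k2*r2 - s*k3 = 0) (hr2 : r2 ≤ 1)
    (hU : -(-s*k1*v1 + k2*v2*t2 + k3*v3*t3) ≤ A)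
    (hW : -B ≤ -(k1*v1*r1 + k2*v2*r2 - s*k3*v3))
    (hA : m ≤ A) (hB : m ≤ B)
    (hc2 : c ≤ 1) (hc1 : 2 ≤ c * (s+1))
    (hG : ∀ z : ℝ, s - 1 ≤ z → z ≤ 1 →
      0 ≤ 2*s*z^2 - z*(s^2+1+(s^2-1)*c) + (s+1)^2*(s-1)*c/2) :
    m ≤ c/2 * (A + B) := by
  have hk2 : k2 = 1 - k1 - k3 := by linarith
  set m0 := k1*(v1-v2) + k3*(v2-v3) with hm0
  have hmm : m ≤ m0 := by
    have e : m0 - m = (k1*(1+z1))*(v1-v2) + (k3*(1-z3))*(v2-v3) := by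
      have : k2*z2 = -(k1*z1+k3*z3) := by linarith
      have e2 : k2*v2*z2 = v2 * (k2*z2) := by ring
      rw [hm, e2, this, hm0]; ring
    have := mul_nonneg (mul_nonneg p1 (by linarith : 0 ≤ 1+z1)) (sub_nonneg.2 h12)
    have := mul_nonneg (mul_nonneg p3 (by linarith : 0 ≤ 1-z3)) (sub_nonneg.2 h23)
    linarith
  have hx : 0 ≤ v1 := by nlinarith
  have hy : 0 ≤ -v3 := by nlinarith
  have hU' : ((s+1)*k1)*v1 - (1-(s+1)*k1)*(-v3) ≤ A := by
    have e : -(-s*k1*v1 + k2*v2*t2 + k3*v3*t3) - (((s+1)*k1)*v1 - (1-(s+1)*k1)*(-v3))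
       = (k2*(1-t2))*(v2-v3) := by
      have a1 : k3*t3 = s*k1 - k2*t2 := by linarith
      have a2 : k3*v3*t3 = v3*(k3*t3) := by ring
      have a3 : k2*v2 = -(k1*v1+k3*v3) := by linarith
      have a4 : (k2*(1-t2))*(v2-v3) = k2*v2 - k2*v2*t2 - (k2*(1-t2))*v3 := by ring
      rw [a4, a3, a2, a1, hk2]; ring
    have := mul_nonneg (mul_nonneg p2 (by linarith : 0 ≤ 1-t2)) (sub_nonneg.2 h23)
    linarith
  have hW' : ((s+1)*k3)*(-v3) - (1-(s+1)*k3)*v1 ≤ B := by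
    have e : (k1*v1*r1 + k2*v2*r2 - s*k3*v3) - (((s+1)*k3)*(-v3) - (1-(s+1)*k3)*v1)
       = (k2*(1-r2))*(v1-v2) := by
      have a1 : k1*r1 = s*k3 - k2*r2 := by linarith
      have a2 : k1*v1*r1 = v1*(k1*r1) := by ring
      have a3 : k2*v2 = -(k1*v1+k3*v3) := by linarith
      have a4 : (k2*(1-r2))*(v1-v2) = -(k2*v2) + k2*v2*r2 + (k2*(1-r2))*v1 := by ring
      rw [a4, a3, a2, a1, hk2]; ring
    have := mul_nonneg (mul_nonneg p2 (by linarith : 0 ≤ 1-r2)) (sub_nonneg.2 h12)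
    linarith
  have K := key s c ((s+1)*k1) ((s+1)*k2) ((s+1)*k3) v1 (-v3) m0 (max A m0) (max B m0) hs hl1 hl2 hl3
    (by rw [hk2]; ring) hx hy (by linarith) hc1 hG
    (by
      have a3 : k2*v2 = -(k1*v1+k3*v3) := by linarith
      have e : m0 * ((s+1)*((s+1)*k2)) = (s+1)^2 * (k1*v1*k2 - k1*(k2*v2) + k3*(k2*v2) - k3*v3*k2) := by
        rw [hm0]; ring
      rw [e, a3, hk2]; ring)
    (hU'.trans (le_max_left _ _)) (hW'.trans (le_max_left _ _)) (le_max_right _ _) (le_max_right _ _)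
  have hc0 : 0 < c := by
    by_contra h; nlinarith
  have q1 : max A m0 ≤ A + (m0 - m) := max_le (by linarith) (by linarith)
  have q2 : max B m0 ≤ B + (m0 - m) := max_le (by linarith) (by linarith)
  nlinarith

theorem core_num (s c : ℝ) (k v z : Fin 3 → ℝ) (T : Fin 3 → Fin 3 → ℝ) (m A B : ℝ) (hs : 1 < s)
    (hk : ∑ i, k i = 1) (hk0 : ∀ i, 0 ≤ k i)
    (hv : ∑ i, k i * v i = 0)
    (hz : ∑ i, k i * z i = 0) (hz1 : ∀ i, -1 ≤ z i) (hz3 : ∀ i, z i ≤ 1)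
    (hm : m = -∑ i, k i * v i * z i)
    (hl : ∀ i, (s+1)*k i ≤ 1)
    (hT : ∀ i, ∑ j, k j * T i j = 0) (hT1 : ∀ i j, T i j ≤ 1) (hTs : ∀ i, T i i = -s)
    (hU : ∀ i, -∑ j, k j * v j * T i j ≤ A)
    (hW : ∀ i, -B ≤ -∑ j, k j * v j * T i j)
    (hA : m ≤ A) (hB : m ≤ B)
    (hc2 : c ≤ 1) (hc1 : 2 ≤ c * (s+1))
    (hG : ∀ z : ℝ, s - 1 ≤ z → z ≤ 1 →
      0 ≤ 2*s*z^2 - z*(s^2+1+(s^2-1)*c) + (s+1)^2*(s-1)*c/2) :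
    m ≤ c/2 * (A + B) := by
  have hmono := Tuple.monotone_sort v
  set σ := Tuple.sort v with hσ
  have h01 : v (σ 0) ≤ v (σ 1) := hmono (by decide)
  have h12 : v (σ 1) ≤ v (σ 2) := hmono (by decide)
  have S : ∀ f : Fin 3 → ℝ, ∑ i, f i = f (σ 2) + f (σ 1) + f (σ 0) := by
    intro f
    rw [← Equiv.sum_comp σ f, Fin.sum_univ_three]; ring
  simp only [S] at hk hv hz hm hT hU hW
  have hTa := hT (σ 2)
  have hTb := hT (σ 0)
  have hUa := hU (σ 2)
  have hWb := hW (σ 0)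
  rw [hTs] at hTa hTb hUa hWb
  exact core_sorted s c (k (σ 2)) (k (σ 1)) (k (σ 0)) (v (σ 2)) (v (σ 1)) (v (σ 0))
    (z (σ 2)) (z (σ 1)) (z (σ 0)) (T (σ 2) (σ 1)) (T (σ 2) (σ 0)) (T (σ 0) (σ 2)) (T (σ 0) (σ 1))
    m A B hs hk (hk0 _) (hk0 _) (hk0 _) h12 h01 hv hz (hz1 _) (hz3 _) hm (hl _) (hl _) (hl _)
    (by linarith) (hT1 _ _) (by linarith) (hT1 _ _) (by linarith) (by linarith) hA hB hc2 hc1 hG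

/-- the conditions on the constant used in the proof -/
def GoodC (s c : ℝ) : Prop := c ≤ 1 ∧ 2 ≤ c * (s+1) ∧ ∀ z : ℝ, s - 1 ≤ z → z ≤ 1 →
      0 ≤ 2*s*z^2 - z*(s^2+1+(s^2-1)*c) + (s+1)^2*(s-1)*c/2

theorem phi_gt : (1.6:ℝ) < phiR := by
  have : (2.2:ℝ) < Real.sqrt 5 := Real.lt_sqrt_of_sq_lt (by norm_num)
  unfold phiR; linarith

theorem phi_lt : phiR < (1.65:ℝ) := by
  have : Real.sqrt 5 < (2.3:ℝ) := by
    rw [Real.sqrt_lt' (by norm_num)]; norm_num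
  unfold phiR; linarith

theorem phi_sq {s : ℝ} (hs : phiR < s) : s + 1 ≤ s^2 := by
  have h5 : Real.sqrt 5 ^ 2 = 5 := Real.sq_sqrt (by norm_num)
  have h := phi_gt
  have e : phiR^2 = phiR + 1 := by
    unfold phiR; nlinarith
  nlinarith

theorem cExpr2_eq {s : ℝ} (hs : 1 < s) :
    (s^2-1) * cExpr2 s = s^2+2*s-1-2*Real.sqrt (s*(s^2-1)) := by
  have h1 : 0 < s^2-1 := by nlinarith
  have hq : Real.sqrt (s*(s^2-1)) ^ 2 = s*(s^2-1) := Real.sq_sqrt (by positivity)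
  have hq0 := Real.sqrt_nonneg (s*(s^2-1))
  have h2 : 0 < s^2+2*s-1+2*Real.sqrt (s*(s^2-1)) := by nlinarith
  unfold cExpr2
  rw [← mul_div_assoc, div_eq_iff (by positivity)]
  linear_combination 4*(s^2-1)*hq

theorem good2 {s : ℝ} (hs : phiR < s) : GoodC s (cExpr2 s) := by
  have h0 := phi_gt
  have h1 : 1 < s := by linarith
  have h2 := phi_sq hs
  have h3 : 0 < s^2-1 := by nlinarith
  have e := cExpr2_eq h1
  have hq : Real.sqrt (s*(s^2-1)) ^ 2 = s*(s^2-1) := Real.sq_sqrt (by positivity)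
  have hq0 := Real.sqrt_nonneg (s*(s^2-1))
  set q := Real.sqrt (s*(s^2-1))
  set c := cExpr2 s
  have hqs : s ≤ q := by
    apply le_of_sq_le_sq _ hq0 
    rw [hq]; nlinarith
  have hq2 : 2*q ≤ s^2+1 := by
    apply le_of_sq_le_sq _ (by positivity)
    have : (2*q)^2 = 4*(s*(s^2-1)) := by rw [← hq]; ring
    rw [this]; nlinarith [sq_nonneg (s^2-2*s-1)]
  refine ⟨?_, ?_, ?_⟩
  · by_contra h; push Not at h; nlinarith
  · have : 0 ≤ (c*(s+1) - 2)*(s-1) := by nlinarith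
    have := nonneg_of_mul_nonneg_left this (by linarith : 0 < s-1)
    linarith
  · intro z _ _
    have hA : (s^2+1+(s^2-1)*c)^2 = 4*s*(s+1)*((s^2-1)*c) := by
      rw [e]; linear_combination 4*hq
    have : 0 ≤ (2*s*z^2 - z*(s^2+1+(s^2-1)*c) + (s+1)^2*(s-1)*c/2) * (8*s) := by
      have : (2*s*z^2 - z*(s^2+1+(s^2-1)*c) + (s+1)^2*(s-1)*c/2) * (8*s)
        = (4*s*z - (s^2+1+(s^2-1)*c))^2 := by
        linear_combination -hA
      rw [this]; positivity
    exact nonneg_of_mul_nonneg_left this (by linarith)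

theorem good3 {s : ℝ} (hs : phiR < s) (hs2 : s ≤ 2) (hP : s^3-7*s^2+9*s+1 ≤ 0) :
    GoodC s (cExpr3 s) := by
  have h0 := phi_gt
  have h1 : 1 < s := by linarith
  have hd : 0 < (3-s)*(s+1) := by nlinarith
  have e : cExpr3 s * ((3-s)*(s+1)) = 2*(1+2*s-s^2) := by
    unfold cExpr3
    have : (s-3)*(s+1) ≠ 0 := by nlinarith
    rw [div_mul_eq_mul_div, div_eq_iff this]; ring
  set c := cExpr3 s
  refine ⟨?_, ?_, ?_⟩
  · by_contra h; push Not at h; nlinarith [sq_nonneg (s-1)]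
  · have : 0 ≤ (c*(s+1) - 2)*(3-s) := by nlinarith
    have := nonneg_of_mul_nonneg_left this (by linarith : 0 < 3-s)
    linarith
  · intro z hz hz1
    have e2 : (2*s*z^2 - z*(s^2+1+(s^2-1)*c) + (s+1)^2*(s-1)*c/2) * (3-s)
       = (z-(s-1)) * (2*s*(3-s)*z - (1+s)*(1+2*s-s^2)) := by
      linear_combination (-z*(s-1) + (s+1)*(s-1)/2)*e
    have : 0 ≤ (2*s*z^2 - z*(s^2+1+(s^2-1)*c) + (s+1)^2*(s-1)*c/2) * (3-s) := by
      rw [e2]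
      apply mul_nonneg (by linarith)
      have : 2*s*(3-s)*(s-1) ≤ 2*s*(3-s)*z := 
        mul_le_mul_of_nonneg_left hz (by nlinarith)
      nlinarith
    exact nonneg_of_mul_nonneg_left this (by linarith)

theorem c23_iff {s : ℝ} (hs : phiR < s) (hs2 : s < 2) :
    cExpr2 s = cExpr3 s ↔ s^3-7*s^2+9*s+1 = 0 := by
  have h0 := phi_gt
  have h1 : 1 < s := by linarith
  have h3 : 0 < s^2-1 := by nlinarith
  have e2 := cExpr2_eq h1
  have hd : 0 < (3-s)*(s+1) := by nlinarith
  have e : cExpr3 s * ((3-s)*(s+1)) = 2*(1+2*s-s^2) := by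
    unfold cExpr3
    have : (s-3)*(s+1) ≠ 0 := by nlinarith
    rw [div_mul_eq_mul_div, div_eq_iff this]; ring
  have hq : Real.sqrt (s*(s^2-1)) ^ 2 = s*(s^2-1) := Real.sq_sqrt (by positivity)
  have hq0 := Real.sqrt_nonneg (s*(s^2-1))
  set q := Real.sqrt (s*(s^2-1))
  have e3 : cExpr3 s * (3-s) * (s^2-1) = 2*(1+2*s-s^2)*(s-1) := by
    linear_combination (s-1)*e
  have hid : (s^3-7*s^2+9*s+1)^2 = (s^3-5*s^2+9*s-1)^2 - (2*q*(3-s))^2 := by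
    linear_combination 4*(3-s)^2*hq
  constructor
  · intro h
    rw [h] at e2
    have : 2*q*(3-s) = s^3-5*s^2+9*s-1 := by linear_combination (3-s)*e2 - e3
    rw [this] at hid
    have : (s^3-7*s^2+9*s+1)^2 = 0 := by rw [hid]; ring
    exact pow_eq_zero_iff (two_ne_zero) |>.1 this
  · intro h
    rw [h] at hid
    have h4 : 0 ≤ s^3-5*s^2+9*s-1 := by nlinarith
    have h5 : 0 ≤ 2*q*(3-s) := mul_nonneg (by linarith) (by linarith)
    have h6 : 2*q*(3-s) = s^3-5*s^2+9*s-1 := by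
      rw [← sq_eq_sq₀ h5 h4]; linarith
    have : (cExpr2 s - cExpr3 s) * ((s^2-1)*(3-s)) = 0 := by
      linear_combination (3-s)*e2 - e3 - h6
    have h7 : (s^2-1)*(3-s) ≠ 0 := by
      have : 0 < (s^2-1)*(3-s) := mul_pos h3 (by linarith)
      exact this.ne'
    have := (mul_eq_zero.1 this).resolve_right h7
    linarith

theorem good_c {s : ℝ} (hs : phiR < s) (hs2 : s ≤ 2) : GoodC s (cFun s) := by
  unfold cFun
  rw [if_neg (not_le.2 hs)]
  split_ifs with h
  · exact good2 hs
  · push Not at h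
    apply good3 hs hs2
    have hne : {s : ℝ | phiR < s ∧ s < 2 ∧ cExpr2 s = cExpr3 s}.Nonempty := by
      have hc : ContinuousOn (fun s : ℝ => s^3-7*s^2+9*s+1) (Set.Icc 1.7 2) := by fun_prop
      have := intermediate_value_Icc' (by norm_num) hc
      obtain ⟨x, ⟨hx1, hx2⟩, hx⟩ := this (show (0:ℝ) ∈ _ by constructor <;> norm_num)
      have hp := phi_lt
      have hx3 : phiR < x := by linarith
      have hx4 : x < 2 := by
        rcases hx2.lt_or_eq with h | h
        · exact h
        · subst h; norm_num at hx
      exact ⟨x, hx3, hx4, (c23_iff hx3 hx4).2 hx⟩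
    obtain ⟨x, ⟨hx1, hx2, hx3⟩, hx⟩ := exists_lt_of_csInf_lt hne h
    have := (c23_iff hx1 hx2).1 hx3
    have h0 := phi_gt
    nlinarith [mul_pos (sub_pos.2 hx) (sub_pos.2 hx), mul_pos (sub_pos.2 hx) (by linarith : 0 < x - 1), mul_nonneg (sub_nonneg.2 hx.le) (by linarith : 0 ≤ 2 - s), mul_nonneg (mul_nonneg (sub_nonneg.2 hx.le) (by linarith : 0 ≤ 2 - s)) (by linarith : 0 ≤ s-1), mul_nonneg (mul_nonneg (sub_nonneg.2 hx.le) (by linarith : 0 ≤ 2 - x)) (by linarith : 0 ≤ s-1), mul_nonneg (mul_nonneg (sub_nonneg.2 hx.le) (by linarith : 0 ≤ 2 - x)) (by linarith : 0 ≤ x-1)]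

theorem inner2 (a x : E2) : (inner ℝ a x : ℝ) = a 0 * x 0 + a 1 * x 1 := by
  simp [PiLp.inner_apply, Fin.sum_univ_two, mul_comm]

theorem span_repr (b0 b1 P0 P1 a : E2) (s : ℝ) (hs : 1 < s)
    (h00 : (inner ℝ b0 P0 : ℝ) = -s) (h11 : (inner ℝ b1 P1 : ℝ) = -s)
    (h01 : (inner ℝ b0 P1 : ℝ) ≤ 1) (h10 : (inner ℝ b1 P0 : ℝ) ≤ 1)
    (g01 : -s < (inner ℝ b0 P1 : ℝ)) (g10 : -s < (inner ℝ b1 P0 : ℝ)) :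
    ∃ c0 c1 : ℝ, ∀ x : E2, (inner ℝ a x : ℝ) = c0 * inner ℝ b0 x + c1 * inner ℝ b1 x := by
  have hD : b0 0 * b1 1 - b0 1 * b1 0 ≠ 0 := by
    intro hD
    have e : (inner ℝ b0 P0 : ℝ) * inner ℝ b1 P1 - inner ℝ b0 P1 * inner ℝ b1 P0 = 0 := by
      simp only [inner2]
      linear_combination (P0 0 * P1 1 - P0 1 * P1 0) * hD
    rw [h00, h11] at e
    set u := (inner ℝ b0 P1 : ℝ)
    set w := (inner ℝ b1 P0 : ℝ)
    have h1 : u^2 < s^2 := sq_lt_sq' g01 (by linarith)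
    have h2 : w^2 < s^2 := sq_lt_sq' g10 (by linarith)
    nlinarith [sq_nonneg (u-w)]
  refine ⟨(a 0 * b1 1 - a 1 * b1 0)/(b0 0 * b1 1 - b0 1 * b1 0),
    (b0 0 * a 1 - b0 1 * a 0)/(b0 0 * b1 1 - b0 1 * b1 0), fun x => ?_⟩
  rw [div_mul_eq_mul_div, div_mul_eq_mul_div, ← add_div, eq_div_iff hD]
  simp only [inner2]
  ring

theorem weights_le (T k : Fin 3 → ℝ) (i : Fin 3) (s : ℝ)
    (hk : ∑ i, k i = 1) (hk0 : ∀ i, 0 ≤ k i) (hT : ∑ j, k j * T j = 0) (hT1 : ∀ j, T j ≤ 1)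
    (hTs : T i = -s) : (s+1) * k i ≤ 1 := by
  have h1 : ∑ j, k j * (1 - T j) = 1 := by
    simp only [mul_sub, mul_one, Finset.sum_sub_distrib, hk, hT, sub_zero]
  have h2 := Finset.single_le_sum (f := fun j => k j * (1 - T j)) (s := Finset.univ)
    (fun j _ => mul_nonneg (hk0 j) (by linarith [hT1 j])) (Finset.mem_univ i)
  simp only [h1, hTs] at h2
  linarith

theorem core_geom (K : Set E2) (t : E2) (b p : Fin 3 → E2) (k : Fin 3 → ℝ) (s c : ℝ) (hs : 1 < s)
    (hgood : GoodC s c)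
    (hb : ∀ x ∈ K, ∀ i, (inner ℝ (b i) (x - t) : ℝ) ≤ 1) (hp : ∀ i, p i ∈ K)
    (hps : ∀ i, (inner ℝ (b i) (p i - t) : ℝ) = -s)
    (hk : ∑ i, k i = 1) (hk0 : ∀ i, 0 ≤ k i)
    (hkb : ∀ x : E2, ∑ i, k i * (inner ℝ (b i) x : ℝ) = 0)
    (x a : E2) (hx1 : t + x ∈ K) (hx2 : t - x ∈ K) (A B : ℝ)
    (hA : ∀ y ∈ K, (inner ℝ a (y - t) : ℝ) ≤ A) (hB : ∀ y ∈ K, -B ≤ (inner ℝ a (y - t) : ℝ)) :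
    (inner ℝ a x : ℝ) ≤ c/2 * (A + B) := by
  have hT1 : ∀ i j, (inner ℝ (b j) (p i - t) : ℝ) ≤ 1 := fun i j => hb _ (hp i) j
  have hT : ∀ i, ∑ j, k j * (inner ℝ (b j) (p i - t) : ℝ) = 0 := fun i => hkb _
  have hl : ∀ i, (s+1) * k i ≤ 1 := fun i =>
    weights_le (fun j => (inner ℝ (b j) (p i - t) : ℝ)) k i s hk hk0 (hT i) (hT1 i) (hps i)
  have hk3 := hk
  rw [Fin.sum_univ_three] at hk3
  have kpos : ∀ i, 0 < k i := by
    have e0 := hl 0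
    have e1 := hl 1
    have e2 := hl 2
    intro i
    fin_cases i
    · show 0 < k 0
      by_contra h; nlinarith
    · show 0 < k 1
      by_contra h; nlinarith
    · show 0 < k 2
      by_contra h; nlinarith
  have l0 := hl 0
  have l1 := hl 1
  have l2 := hl 2
  have g10 : -s < (inner ℝ (b 1) (p 0 - t) : ℝ) := by
    by_contra h
    have e := hT 0
    rw [Fin.sum_univ_three, hps 0] at e
    have := hT1 0 2
    nlinarith [kpos 1, kpos 2]
  have g01 : -s < (inner ℝ (b 0) (p 1 - t) : ℝ) := by
    by_contra h
    have e := hT 1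
    rw [Fin.sum_univ_three, hps 1] at e
    have := hT1 1 2
    nlinarith [kpos 0, kpos 2]
  obtain ⟨c0, c1, hc⟩ := span_repr (b 0) (b 1) (p 0 - t) (p 1 - t) a s hs (hps 0) (hps 1)
    (hT1 1 0) (hT1 0 1) g01 g10
  obtain ⟨v, hv, hval⟩ : ∃ v : Fin 3 → ℝ, ∑ i, k i * v i = 0 ∧
      ∀ y : E2, (inner ℝ a y : ℝ) = -∑ i, k i * v i * inner ℝ (b i) y := by
    have n0 := (kpos 0).ne'
    have n1 := (kpos 1).ne'
    refine ⟨![-c0/k 0 + (c0+c1), -c1/k 1 + (c0+c1), c0+c1], ?_, fun y => ?_⟩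
    · simp only [Fin.sum_univ_three, Matrix.cons_val_zero, Matrix.cons_val_one, Matrix.cons_val]
      field_simp
      linear_combination (c0+c1)*hk3
    · have h := hkb y
      simp only [Fin.sum_univ_three, Matrix.cons_val_zero, Matrix.cons_val_one, Matrix.cons_val] at h ⊢
      rw [hc]
      field_simp
      linear_combination (c0+c1)*h
  have hxp : ∀ i, (inner ℝ (b i) x : ℝ) ≤ 1 := fun i => by
    simpa using hb _ hx1 i
  have hxm : ∀ i, -1 ≤ (inner ℝ (b i) x : ℝ) := fun i => by
    have := hb _ hx2 i
    rw [show t - x - t = -x by abel, inner_neg_right] at this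
    linarith
  have hA' := hA _ hx1
  rw [add_sub_cancel_left] at hA'
  have hB' := hB _ hx2
  rw [show t - x - t = -x by abel, inner_neg_right] at hB'
  exact core_num s c k v (fun i => inner ℝ (b i) x) (fun i j => inner ℝ (b j) (p i - t)) _ A B hs
    hk hk0 hv (hkb x) hxm hxp (hval x) hl hT hT1 hps
    (fun i => by rw [← hval]; exact hA _ (hp i)) (fun i => by rw [← hval]; exact hB _ (hp i))
    hA' (by linarith) hgood.1 hgood.2.1 hgood.2.2

theorem three_points (F : Set E2) (x : E2) (hx : x ∈ convexHull ℝ F) :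
    ∃ (a : Fin 3 → E2) (w : Fin 3 → ℝ), (∀ i, a i ∈ F) ∧ w ∈ stdSimplex ℝ (Fin 3) ∧
      ∑ i, w i • a i = x := by
  obtain ⟨ι, _, z, w, hz, hi, hw, hw1, hx⟩ := eq_pos_convex_span_of_mem_convexHull hx
  have hcard : Fintype.card ι ≤ 3 := by
    have h1 := hi.card_le_finrank_succ
    have h2 := Submodule.finrank_le (vectorSpan ℝ (Set.range z))
    rw [finrank_euclideanSpace_fin] at h2
    omega
  have hne : Nonempty ι := by
    by_contra h
    rw [not_nonempty_iff] at h
    simp at hw1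
  obtain ⟨i0⟩ := hne
  obtain ⟨f⟩ := Function.Embedding.nonempty_of_card_le
    (α := ι) (β := Fin 3) (by simpa using hcard)
  have hsum : ∀ {M : Type} [AddCommMonoid M] (g : Fin 3 → M), (∀ j, (¬ ∃ i, f i = j) → g j = 0) →
      ∑ j, g j = ∑ i, g (f i) := by
    intro M _ g hg
    classical
    rw [← Finset.sum_map Finset.univ f g]
    symm
    apply Finset.sum_subset (Finset.subset_univ _)
    intro j _ hj
    apply hg
    simpa using hj
  refine ⟨Function.extend f z (fun _ => z i0), Function.extend f w 0, ?_, ⟨?_, ?_⟩, ?_⟩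
  · intro j
    by_cases h : ∃ i, f i = j
    · obtain ⟨i, rfl⟩ := h
      rw [f.injective.extend_apply]; exact hz ⟨i, rfl⟩
    · rw [Function.extend_apply' _ _ _ h]; exact hz ⟨i0, rfl⟩
  · intro j
    by_cases h : ∃ i, f i = j
    · obtain ⟨i, rfl⟩ := h
      rw [f.injective.extend_apply]; exact (hw i).le
    · rw [Function.extend_apply' _ _ _ h]; simp
  · rw [hsum]
    · simp only [f.injective.extend_apply, hw1]
    · intro j h
      rw [Function.extend_apply' _ _ _ h]; simp
  · rw [hsum]
    · simp only [f.injective.extend_apply, hx]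
    · intro j h
      rw [Function.extend_apply' _ _ _ h]; simp

theorem compact_hull (F : Set E2) (hF : IsCompact F) : IsCompact (convexHull ℝ F) := by
  have h1 : IsCompact ((Set.univ.pi fun _ : Fin 3 => F) ×ˢ stdSimplex ℝ (Fin 3)) :=
    (isCompact_univ_pi fun _ => hF).prod (isCompact_stdSimplex ℝ (Fin 3))
  have h2 : Continuous fun q : (Fin 3 → E2) × (Fin 3 → ℝ) => ∑ i, q.2 i • q.1 i := by fun_prop
  convert h1.image h2 using 1
  ext x
  constructor
  · intro hx
    obtain ⟨a, w, ha, hw, h⟩ := three_points F x hx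
    exact ⟨(a, w), ⟨fun i _ => ha i, hw⟩, h⟩
  · rintro ⟨⟨a, w⟩, ⟨ha, hw⟩, rfl⟩
    exact (convex_convexHull ℝ F).sum_mem (fun i _ => hw.1 i) hw.2
      (fun i _ => subset_convexHull ℝ F (ha i trivial))

def Pol (C : Set E2) : Set E2 := {a | ∀ c ∈ C, (inner ℝ a c : ℝ) ≤ 1}

theorem sep_inner (K : Set E2) (h1 : Convex ℝ K) (h2 : IsClosed K) (x : E2) (hx : x ∉ K) :
    ∃ (a : E2) (u : ℝ), (∀ y ∈ K, (inner ℝ a y : ℝ) < u) ∧ u < inner ℝ a x := by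
  obtain ⟨f, u, hf, hu⟩ := geometric_hahn_banach_closed_point h1 h2 hx
  refine ⟨(InnerProductSpace.toDual ℝ E2).symm f, u, ?_, ?_⟩
  · intro y hy; rw [InnerProductSpace.toDual_symm_apply]; exact hf y hy
  · rw [InnerProductSpace.toDual_symm_apply]; exact hu

theorem bipolar (C : Set E2) (h1 : Convex ℝ C) (h2 : IsCompact C) (h0 : (0:E2) ∈ C) (ρ : ℝ)
    (hρ : 0 < ρ) (x : E2) (h : ∀ a ∈ Pol C, (inner ℝ a x : ℝ) ≤ ρ) : x ∈ ρ • C := by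
  by_contra hx
  obtain ⟨a, u, ha, hu⟩ := sep_inner (ρ • C) (h1.smul ρ) (h2.smul ρ).isClosed x hx
  have hu0 : 0 < u := by
    have := ha (ρ • 0) (Set.smul_mem_smul_set h0)
    simpa using this
  have := h ((ρ/u) • a) (by
    intro c hc
    have := ha (ρ • c) (Set.smul_mem_smul_set hc)
    rw [inner_smul_right] at this
    rw [real_inner_smul_left, div_mul_eq_mul_div, div_le_one hu0]
    exact this.le)
  rw [real_inner_smul_left, div_mul_eq_mul_div, div_le_iff₀ hu0] at this
  have : u * ρ < inner ℝ a x * ρ := mul_lt_mul_of_pos_right hu hρ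
  linarith

theorem pol_bound (C : Set E2) (ε : ℝ) (hε : 0 < ε) (hC : Metric.closedBall 0 ε ⊆ C) (a : E2)
    (ha : a ∈ Pol C) : ‖a‖ ≤ 1/ε := by
  rcases eq_or_ne a 0 with rfl | h
  · simp; positivity
  have hn : 0 < ‖a‖ := norm_pos_iff.2 h
  have := ha ((ε/‖a‖) • a) (hC (by
    rw [mem_closedBall_zero_iff, norm_smul, Real.norm_eq_abs, abs_of_pos (by positivity)]
    rw [div_mul_cancel₀ _ hn.ne']))
  rw [inner_smul_right, real_inner_self_eq_norm_sq] at this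
  rw [le_div_iff₀ hε]
  calc ‖a‖*ε = ε/‖a‖*‖a‖^2 := by field_simp
    _ ≤ 1 := this

theorem pol_compact (C : Set E2) (ε : ℝ) (hε : 0 < ε) (hC : Metric.closedBall 0 ε ⊆ C) :
    IsCompact (Pol C) := by
  apply (isCompact_closedBall (0:E2) (1/ε)).of_isClosed_subset
  · have : Pol C = ⋂ c ∈ C, {a : E2 | (inner ℝ a c : ℝ) ≤ 1} := by
      ext a; simp [Pol]
    rw [this]
    exact isClosed_biInter fun c _ => isClosed_le (by fun_prop) continuous_const
  · intro a ha
    rw [mem_closedBall_zero_iff]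
    exact pol_bound C ε hε hC a ha

theorem zero_mem_hull (K C : Set E2) (t : E2) (R ε : ℝ) (hK : IsCompact K)
    (hC1 : Convex ℝ C) (hC2 : IsCompact C) (hε : 0 < ε) (hC : Metric.closedBall 0 ε ⊆ C)
    (hR : 0 < R) (hKR : ∀ a ∈ Pol C, ∀ k ∈ K, (inner ℝ a (k - t) : ℝ) ≤ R)
    (hopt : ∀ ρ, 0 < ρ → ρ < R → ¬ ∃ t' : E2, K ⊆ ρ • C + {t'}) :
    (0:E2) ∈ convexHull ℝ {a | a ∈ Pol C ∧ ∃ p ∈ K, (inner ℝ a (p - t) : ℝ) = R} := by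
  set F := {a | a ∈ Pol C ∧ ∃ p ∈ K, (inner ℝ a (p - t) : ℝ) = R} with hF
  have hPol := pol_compact C ε hε hC
  have hcont : Continuous fun q : E2 × E2 => (inner ℝ q.1 (q.2 - t) : ℝ) := by fun_prop
  have hFc : IsCompact F := by
    have h1 : IsCompact ((Pol C ×ˢ K) ∩ {q : E2 × E2 | (inner ℝ q.1 (q.2 - t) : ℝ) = R}) :=
      (hPol.prod hK).inter_right (isClosed_eq hcont continuous_const)
    convert h1.image continuous_fst using 1
    ext a
    constructor
    · rintro ⟨h1, p, h2, h3⟩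
      exact ⟨(a, p), ⟨⟨h1, h2⟩, h3⟩, rfl⟩
    · rintro ⟨⟨a, p⟩, ⟨⟨h1, h2⟩, h3⟩, rfl⟩
      exact ⟨h1, p, h2, h3⟩
  by_contra h0
  obtain ⟨a', u, ha', hu⟩ := sep_inner _ (convex_convexHull ℝ F) (compact_hull F hFc).isClosed 0 h0
  rw [inner_zero_right] at hu
  obtain ⟨τ, δ, hδ, hτ⟩ : ∃ (τ : E2) (δ : ℝ), 0 < δ ∧ ∀ a ∈ F, δ < (inner ℝ a τ : ℝ) := by
    refine ⟨-a', -u, by linarith, fun a ha => ?_⟩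
    rw [inner_neg_right, real_inner_comm]
    linarith [ha' a (subset_convexHull ℝ F ha)]
  have hZc : IsCompact ((Pol C ×ˢ K) ∩ {q : E2 × E2 | (inner ℝ q.1 τ : ℝ) ≤ δ/2}) :=
    (hPol.prod hK).inter_right (isClosed_le (by fun_prop) continuous_const)
  obtain ⟨η, hη, hZ⟩ : ∃ η : ℝ, 0 < η ∧ ∀ a ∈ Pol C, ∀ k ∈ K, (inner ℝ a τ : ℝ) ≤ δ/2 →
      (inner ℝ a (k - t) : ℝ) ≤ R - η := by
    rcases Set.eq_empty_or_nonempty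
      ((Pol C ×ˢ K) ∩ {q : E2 × E2 | (inner ℝ q.1 τ : ℝ) ≤ δ/2}) with h | h
    · refine ⟨1, one_pos, fun a ha k hk hh => ?_⟩
      have : (a, k) ∈ ((Pol C ×ˢ K) ∩ {q : E2 × E2 | (inner ℝ q.1 τ : ℝ) ≤ δ/2}) := ⟨⟨ha, hk⟩, hh⟩
      rw [h] at this
      exact this.elim
    · obtain ⟨⟨a0, k0⟩, ⟨⟨h1, h2⟩, h3⟩, hmax⟩ := hZc.exists_isMaxOn h hcont.continuousOn
      refine ⟨R - inner ℝ a0 (k0 - t), ?_, fun a ha k hk hh => ?_⟩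
      · rcases (hKR a0 h1 k0 h2).lt_or_eq with h | h
        · linarith
        · have := hτ a0 ⟨h1, k0, h2, h⟩
          have h3 : (inner ℝ a0 τ : ℝ) ≤ δ/2 := h3
          linarith
      · have := hmax (show (a, k) ∈ _ from ⟨⟨ha, hk⟩, hh⟩)
        simp only [Set.mem_ofPred_eq] at this
        linarith
  have hM : ∀ a ∈ Pol C, -(‖τ‖/ε) ≤ (inner ℝ a τ : ℝ) := by
    intro a ha
    have h1 := pol_bound C ε hε hC a ha
    have h2 := abs_real_inner_le_norm a τ
    have h3 : ‖a‖*‖τ‖ ≤ 1/ε*‖τ‖ := mul_le_mul_of_nonneg_right h1 (norm_nonneg _)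
    have h4 := neg_abs_le (inner ℝ a τ : ℝ)
    have : 1/ε*‖τ‖ = ‖τ‖/ε := by ring
    linarith
  have hM0 : 0 ≤ ‖τ‖/ε := by positivity
  set M := ‖τ‖/ε
  obtain ⟨e, he, heM⟩ : ∃ e : ℝ, 0 < e ∧ e*M ≤ η/2 := by
    refine ⟨η/2/(M+1), by positivity, ?_⟩
    rw [div_mul_eq_mul_div, div_le_iff₀ (by positivity)]
    nlinarith
  have heδ : 0 < e*δ := mul_pos he hδ
  have hρ1 : R/2 ≤ max (R/2) (max (R-η/2) (R-e*δ/2)) := le_max_left _ _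
  have hρ2 : R-η/2 ≤ max (R/2) (max (R-η/2) (R-e*δ/2)) := (le_max_left _ _).trans (le_max_right _ _)
  have hρ3 : R-e*δ/2 ≤ max (R/2) (max (R-η/2) (R-e*δ/2)) := (le_max_right _ _).trans (le_max_right _ _)
  have hρ4 : max (R/2) (max (R-η/2) (R-e*δ/2)) < R :=
    max_lt (by linarith) (max_lt (by linarith) (by linarith))
  set ρ := max (R/2) (max (R-η/2) (R-e*δ/2))
  apply hopt ρ (by linarith) hρ4
  refine ⟨t + e • τ, fun k hk => ?_⟩
  have hmem : k - (t + e • τ) ∈ ρ • C := by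
    apply bipolar C hC1 hC2 (hC (by simp [hε.le])) ρ (by linarith)
    intro a ha
    rw [show k - (t + e • τ) = (k - t) - e • τ by abel, inner_sub_right, inner_smul_right]
    have h1 := hM a ha
    rcases le_or_gt (inner ℝ a τ : ℝ) (δ/2) with h | h
    · have h2 := hZ a ha k hk h
      nlinarith
    · have h2 := hKR a ha k hk
      nlinarith
  exact ⟨_, hmem, _, rfl, by simp⟩

theorem sub_compact {K : Set E2} (hK : IsCompact K) : IsCompact (K - K) := by
  rw [sub_eq_add_neg]; exact hK.add hK.neg

theorem ball_in_C (C : Set E2) (hC : IsConvexBody C) (hsym : C = -C) :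
    ∃ ε : ℝ, 0 < ε ∧ Metric.closedBall 0 ε ⊆ C := by
  obtain ⟨h1, h2, x, hx⟩ := hC
  rw [mem_interior_iff_mem_nhds, Metric.mem_nhds_iff] at hx
  obtain ⟨δ, hδ, hb⟩ := hx
  refine ⟨δ/2, by positivity, fun y hy => ?_⟩
  rw [mem_closedBall_zero_iff] at hy
  have e1 : x + y ∈ C := hb (by rw [Metric.mem_ball, dist_eq_norm]; simp; linarith)
  have e2 : x - y ∈ C := hb (by rw [Metric.mem_ball, dist_eq_norm]; simp; linarith)
  have e3 : -(x - y) ∈ C := by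
    rw [hsym]; simpa using e2
  have := h1 e1 e3 (by norm_num : (0:ℝ) ≤ 1/2) (by norm_num : (0:ℝ) ≤ 1/2) (by norm_num)
  convert this using 1
  module

theorem trans_sub_iff (K C : Set E2) (ρ : ℝ) (t : E2) :
    ρ • C + {t} ⊆ K ↔ ∀ c ∈ C, ρ • c + t ∈ K := by
  constructor
  · intro h c hc
    exact h ⟨_, Set.smul_mem_smul_set hc, _, rfl, rfl⟩
  · rintro h _ ⟨_, ⟨c, hc, rfl⟩, _, rfl, rfl⟩
    exact h c hc

theorem inrad_bdd (K C : Set E2) (hK : IsCompact K) (ε : ℝ) (hε : 0 < ε)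
    (hC : Metric.closedBall 0 ε ⊆ C) :
    BddAbove {ρ : ℝ | 0 < ρ ∧ ∃ t : E2, ρ • C + {t} ⊆ K} := by
  obtain ⟨M, hM⟩ := hK.isBounded.subset_closedBall (0:E2)
  refine ⟨M/ε, ?_⟩
  rintro ρ ⟨hρ, t, ht⟩
  rw [trans_sub_iff] at ht
  set e : E2 := EuclideanSpace.single 0 1 with he
  have hn : ‖e‖ = 1 := by simp [he]
  have h1 := hM (ht (ε • e) (hC (by simp [norm_smul, hn, abs_of_pos hε])))
  have h2 := hM (ht (-(ε • e)) (hC (by simp [norm_smul, hn, abs_of_pos hε])))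
  rw [mem_closedBall_zero_iff] at h1 h2
  have h3 : ‖(2*ρ*ε) • e‖ ≤ M + M := by
    have : (2*ρ*ε) • e = (ρ • ε • e + t) - (ρ • -(ε • e) + t) := by module
    rw [this]
    exact (norm_sub_le _ _).trans (add_le_add h1 h2)
  rw [norm_smul, hn, Real.norm_eq_abs, abs_of_pos (by positivity)] at h3
  rw [le_div_iff₀ hε]
  linarith

theorem inrad_attained (K C : Set E2) (hK : IsConvexBody K) (hC : IsCompact C) (ε : ℝ) (hε : 0 < ε)
    (hCb : Metric.closedBall 0 ε ⊆ C) :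
    0 < inrad K C ∧ ∃ t : E2, ∀ c ∈ C, inrad K C • c + t ∈ K := by
  obtain ⟨h1, h2, x, hx⟩ := hK
  rw [mem_interior_iff_mem_nhds, Metric.mem_nhds_iff] at hx
  obtain ⟨δ, hδ, hb⟩ := hx
  obtain ⟨N, hN0, hN⟩ := hC.isBounded.subset_closedBall_lt 0 (0:E2)
  have hbdd := inrad_bdd K C h2 ε hε hCb
  obtain ⟨b, hbb⟩ := id hbdd
  have hρ0 : 0 < δ/(2*N) := by positivity
  have hel : ∀ c ∈ C, (δ/(2*N)) • c + x ∈ K := by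
    intro c hc
    apply hb
    have := hN hc
    rw [mem_closedBall_zero_iff] at this
    rw [Metric.mem_ball, dist_eq_norm, add_sub_cancel_right, norm_smul, Real.norm_eq_abs,
      abs_of_pos hρ0]
    calc δ/(2*N)*‖c‖ ≤ δ/(2*N)*N := by gcongr
      _ = δ/2 := by field_simp
      _ < δ := by linarith
  have hmem : δ/(2*N) ∈ {ρ : ℝ | 0 < ρ ∧ ∃ t : E2, ρ • C + {t} ⊆ K} :=
    ⟨hρ0, x, (trans_sub_iff _ _ _ _).2 hel⟩
  have h0C : (0:E2) ∈ C := hCb (by simp [hε.le])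
  have hxK : x ∈ K := by simpa using hel 0 h0C
  have hS : IsCompact ((Set.Icc 0 b ×ˢ K) ∩ ⋂ c ∈ C, {q : ℝ × E2 | q.1 • c + q.2 ∈ K}) := by
    apply (isCompact_Icc.prod h2).inter_right
    exact isClosed_biInter fun c _ => h2.isClosed.preimage (by fun_prop)
  have hSm : ∀ ρ t, 0 < ρ → (∀ c ∈ C, ρ • c + t ∈ K) →
      (ρ, t) ∈ ((Set.Icc 0 b ×ˢ K) ∩ ⋂ c ∈ C, {q : ℝ × E2 | q.1 • c + q.2 ∈ K}) := by
    intro ρ t hρ h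
    refine ⟨⟨⟨hρ.le, hbb ⟨hρ, t, (trans_sub_iff _ _ _ _).2 h⟩⟩, by simpa using h 0 h0C⟩, ?_⟩
    simp only [Set.mem_iInter]
    exact h
  obtain ⟨⟨r, t⟩, ⟨_, hr⟩, hmax⟩ := hS.exists_isMaxOn ⟨_, hSm _ _ hρ0 hel⟩
    (continuous_fst.continuousOn)
  simp only [Set.mem_iInter] at hr
  have hr0 : 0 < r := lt_of_lt_of_le hρ0 (hmax (hSm _ _ hρ0 hel))
  have : inrad K C = r := by
    apply le_antisymm
    · apply csSup_le ⟨_, hmem⟩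
      rintro ρ ⟨hρ, t', ht'⟩
      exact hmax (hSm ρ t' hρ ((trans_sub_iff _ _ _ _).1 ht'))
    · exact le_csSup hbdd ⟨hr0, t, (trans_sub_iff _ _ _ _).2 hr⟩
  rw [this]
  exact ⟨hr0, t, hr⟩

theorem diam_ge (K C : Set E2) (hK : IsCompact K) (hsym : C = -C) (ε : ℝ) (hε : 0 < ε)
    (hCb : Metric.closedBall 0 ε ⊆ C) (a : E2) (ha : a ∈ Pol C) (k k' : E2) (hk : k ∈ K)
    (hk' : k' ∈ K) : (inner ℝ a (k - k') : ℝ) ≤ diamB K C := by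
  have hneg : ∀ c ∈ C, -c ∈ C := fun c hc => by rw [hsym]; simpa using hc
  have ha' : ∀ c ∈ C, -1 ≤ (inner ℝ a c : ℝ) := fun c hc => by
    have := ha _ (hneg c hc)
    rw [inner_neg_right] at this
    linarith
  have : (inner ℝ a (k - k') : ℝ)/2 ≤ circum (K - K) (C - C) := by
    apply le_csInf
    · obtain ⟨N, hN0, hN⟩ := (sub_compact hK).isBounded.subset_closedBall_lt 0 (0:E2)
      refine ⟨N/ε, by positivity, 0, fun u hu => ?_⟩
      have hu' := hN hu
      rw [mem_closedBall_zero_iff] at hu'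
      refine ⟨u, ⟨(ε/N) • u - 0, ⟨(ε/N) • u, hCb ?_, 0, hCb ?_, rfl⟩, ?_⟩, 0, rfl, by simp⟩
      · rw [mem_closedBall_zero_iff, norm_smul, Real.norm_eq_abs, abs_of_pos (by positivity)]
        calc ε/N*‖u‖ ≤ ε/N*N := by gcongr
          _ = ε := by field_simp
      · simp [hε.le]
      · simp only [sub_zero, smul_smul]
        rw [show N/ε*(ε/N) = 1 by field_simp, one_smul]
    · rintro ρ ⟨hρ, t, ht⟩
      obtain ⟨_, ⟨_, ⟨c1, h1, c2, h2, rfl⟩, rfl⟩, _, rfl, e1⟩ := ht ⟨k, hk, k', hk', rfl⟩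
      obtain ⟨_, ⟨_, ⟨c3, h3, c4, h4, rfl⟩, rfl⟩, _, rfl, e2⟩ := ht ⟨k', hk', k, hk, rfl⟩
      simp only at e1 e2
      have f1 := congrArg (fun z => (inner ℝ a z : ℝ)) e1
      have f2 := congrArg (fun z => (inner ℝ a z : ℝ)) e2
      simp only [inner_add_right, inner_sub_right, inner_smul_right] at f1 f2
      rw [inner_sub_right]
      have := ha _ h1
      have := ha' _ h2
      have := ha' _ h3
      have := ha _ h4
      nlinarith
  unfold diamB
  linarith

theorem stmt0 (K C : Set E2) (hK : IsConvexBody K) (hC : IsConvexBody C)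
    (hCsym : C = -C) (hpc : inrad K C + circum K C = diamB K C) :
    diamB K C / widthB K C ≤ ((minkAsym K + 1) / 2) * cFun (minkAsym K) := by
  obtain ⟨ε, hε, hCb⟩ := ball_in_C C hC hCsym
  obtain ⟨hr, t, ht⟩ := inrad_attained K C hK hC.2.1 ε hε hCb
  have hdiam := diam_ge K C hK.2.1 hCsym ε hε hCb
  set r := inrad K C with hrdef
  set D := diamB K C with hDdef
  have hRdef : circum K C = D - r := by linarith
  have hneg : ∀ c ∈ C, -c ∈ C := fun c hc => by rw [hCsym]; simpa using hc
  have h0C : (0:E2) ∈ C := hCb (by simp [hε.le])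
  have htK : t ∈ K := by simpa using ht 0 h0C
  have hopt : ∀ ρ, 0 < ρ → (∃ t' : E2, K ⊆ ρ • C + {t'}) → circum K C ≤ ρ := by
    intro ρ hρ h
    exact csInf_le ⟨0, fun x hx => hx.1.le⟩ ⟨hρ, h⟩
  have hR0 : 0 ≤ circum K C := Real.sInf_nonneg fun x hx => hx.1.le
  set R := circum K C with hR
  have hD : 0 < D := by linarith
  -- K - K inside D C
  have hKK : ∀ k ∈ K, ∀ k' ∈ K, k - k' ∈ D • C := fun k hk k' hk' =>
    bipolar C hC.1 hC.2.1 h0C D hD _ fun a ha => hdiam a ha k k' hk hk'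
  have hstrong : ∀ a c : E2, c ∈ C → (∀ c' ∈ C, (inner ℝ a c' : ℝ) ≤ inner ℝ a c) →
      ∀ k ∈ K, (inner ℝ a (k - t) : ℝ) ≤ R * inner ℝ a c := by
    intro a c hc hmax k hk
    obtain ⟨c', hc', e⟩ := hKK k hk _ (ht _ (hneg c hc))
    simp only at e
    have f := congrArg (fun z => (inner ℝ a z : ℝ)) e
    have := hmax c' hc'
    simp only [inner_add_right, inner_sub_right, inner_smul_right, inner_neg_right] at f
    rw [inner_sub_right, hRdef]
    nlinarith
  have hmaxex : ∀ a : E2, ∃ c ∈ C, ∀ c' ∈ C, (inner ℝ a c' : ℝ) ≤ inner ℝ a c := by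
    intro a
    obtain ⟨c, hc, h⟩ := hC.2.1.exists_isMaxOn ⟨0, h0C⟩
      (f := fun c => (inner ℝ a c : ℝ)) (by fun_prop)
    exact ⟨c, hc, fun c' hc' => h hc'⟩
  have hrR : r ≤ R := by
    set e : E2 := EuclideanSpace.single 0 1 with he
    have hn : ‖e‖ = 1 := by simp [he]
    obtain ⟨c, hc, hmax⟩ := hmaxex e
    have h1 := hstrong e c hc hmax _ (ht c hc)
    rw [add_sub_cancel_right, inner_smul_right] at h1
    have h2 := hmax (ε • e) (hCb (by simp [norm_smul, hn, abs_of_pos hε]))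
    rw [inner_smul_right, real_inner_self_eq_norm_sq, hn] at h2
    have h3 : 0 < (inner ℝ e c : ℝ) := by linarith
    exact le_of_mul_le_mul_right h1 h3
  have hRpos : 0 < R := by linarith
  have hKR : ∀ a ∈ Pol C, ∀ k ∈ K, (inner ℝ a (k - t) : ℝ) ≤ R := by
    intro a ha k hk
    obtain ⟨c, hc, hmax⟩ := hmaxex a
    have h1 := hstrong a c hc hmax k hk
    have h2 := ha c hc
    nlinarith
  have h0F := zero_mem_hull K C t R ε hK.2.1 hC.1 hC.2.1 hε hCb hRpos hKR
    (fun ρ h1 h2 h3 => absurd (hopt ρ h1 h3) (not_le.2 h2))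
  obtain ⟨a, k, haF, ⟨hk0, hk⟩, hka⟩ := three_points _ _ h0F
  choose haP p hp hpR using haF
  have hs : 0 < R/r := by positivity
  set s := R/r with hsdef
  have hsr : s * r = R := by rw [hsdef]; field_simp
  -- normals
  set b : Fin 3 → E2 := fun i => (-(1/r)) • a i with hbdef
  have hb : ∀ x ∈ K, ∀ i, (inner ℝ (b i) (x - t) : ℝ) ≤ 1 := by
    intro x hx i
    have h1 := hdiam (a i) (haP i) (p i) x (hp i) hx
    have h2 := hpR i
    rw [inner_sub_right] at h1 h2
    rw [hbdef]
    simp only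
    rw [real_inner_smul_left, inner_sub_right, neg_mul, one_div, ← mul_neg, inv_mul_le_iff₀ hr]
    linarith
  have hps : ∀ i, (inner ℝ (b i) (p i - t) : ℝ) = -s := by
    intro i
    rw [hbdef]
    simp only
    rw [real_inner_smul_left, hpR, hsdef]; ring
  have hkb : ∀ x : E2, ∑ i, k i * (inner ℝ (b i) x : ℝ) = 0 := by
    intro x
    have := congrArg (fun z => -(1/r) * (inner ℝ z x : ℝ)) hka
    simp only [sum_inner, real_inner_smul_left, inner_zero_left, mul_zero, Finset.mul_sum] at this
    rw [← this]
    apply Finset.sum_congr rfl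
    intro i _
    rw [hbdef]
    simp only
    rw [real_inner_smul_left]; ring
  have hl : ∀ i, (s+1) * k i ≤ 1 := fun i =>
    weights_le (fun j => (inner ℝ (b j) (p i - t) : ℝ)) k i s hk hk0 (hkb _)
      (fun j => hb _ (hp i) j) (hps i)
  have hs2 : s ≤ 2 := by
    have e0 := hl 0
    have e1 := hl 1
    have e2 := hl 2
    rw [Fin.sum_univ_three] at hk
    nlinarith
  -- asymmetry
  have hsK : minkAsym K = s := by
    have hmem : s ∈ {ρ : ℝ | 0 < ρ ∧ ∃ c : E2, K - {c} ⊆ ρ • ({c} - K)} := by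
      refine ⟨hs, t, ?_⟩
      rintro _ ⟨x, hx, t', ht', rfl⟩
      rw [show t' = t from ht']
      obtain ⟨c, hc, e⟩ := bipolar C hC.1 hC.2.1 h0C R hRpos (x - t) fun a ha => hKR a ha x hx
      simp only at e
      refine ⟨t - (r • (-c) + t), ⟨t, rfl, _, ht _ (hneg c hc), rfl⟩, ?_⟩
      simp only
      rw [← e, ← hsr]
      module
    apply le_antisymm
    · exact csInf_le ⟨0, fun x hx => hx.1.le⟩ hmem
    · apply le_csInf ⟨_, hmem⟩
      rintro ρ ⟨hρ, c, hc⟩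
      have h1 : ∀ i, s - ρ ≤ -(1+ρ) * (inner ℝ (b i) (c - t) : ℝ) := by
        intro i
        obtain ⟨_, ⟨_, rfl, x, hx, rfl⟩, e⟩ := hc ⟨p i, hp i, c, rfl, rfl⟩
        simp only at e
        have f := congrArg (fun z => (inner ℝ (b i) z : ℝ)) e
        have g1 := hb x hx i
        have g2 := hps i
        simp only [inner_sub_right, inner_smul_right] at f g1 g2 ⊢
        nlinarith
      have h2 : ∑ i, k i * (s - ρ) ≤ ∑ i, k i * (-(1+ρ) * (inner ℝ (b i) (c - t) : ℝ)) :=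
        Finset.sum_le_sum fun i _ => mul_le_mul_of_nonneg_left (h1 i) (hk0 i)
      have h3 : ∑ i, k i * (-(1+ρ) * (inner ℝ (b i) (c - t) : ℝ))
          = -(1+ρ) * ∑ i, k i * (inner ℝ (b i) (c - t) : ℝ) := by
        rw [Finset.mul_sum]
        exact Finset.sum_congr rfl fun i _ => by ring
      rw [h3, hkb, ← Finset.sum_mul, hk] at h2
      linarith
  rw [hsK]
  -- main inclusion
  obtain ⟨hc0, hincl⟩ : 0 < cFun s ∧ ∀ y ∈ C, r • y ∈ (cFun s/2) • (K - K) := by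
    rcases le_or_gt s phiR with h | h
    · have : cFun s = 1 := by unfold cFun; rw [if_pos h]
      rw [this]
      refine ⟨one_pos, fun y hy => ?_⟩
      refine ⟨_, ⟨_, ht y hy, _, ht _ (hneg y hy), rfl⟩, ?_⟩
      simp only
      module
    · have hg := good_c h hs2
      have h1s : 1 < s := by linarith [phi_gt]
      have hc0 : 0 < cFun s := by
        by_contra hh
        have := hg.2.1
        nlinarith
      refine ⟨hc0, fun y hy => ?_⟩
      by_contra hno
      obtain ⟨v, u, hv, hu⟩ := sep_inner _ ((hK.1.sub hK.1).smul (cFun s/2))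
        ((sub_compact hK.2.1).smul (cFun s/2)).isClosed _ hno
      obtain ⟨x1, hx1, hmax⟩ := hK.2.1.exists_isMaxOn ⟨t, htK⟩
        (f := fun c => (inner ℝ v c : ℝ)) (by fun_prop)
      obtain ⟨x2, hx2, hmin⟩ := hK.2.1.exists_isMinOn ⟨t, htK⟩
        (f := fun c => (inner ℝ v c : ℝ)) (by fun_prop)
      have hcore := core_geom K t b p k s (cFun s) h1s hg hb hp hps hk hk0 hkb (r • y) v
        (by rw [add_comm]; exact ht y hy)
        (by have := ht _ (hneg y hy); convert this using 1; module)
        (inner ℝ v (x1 - t)) (-inner ℝ v (x2 - t))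
        (fun z hz => by
          rw [inner_sub_right, inner_sub_right]
          have : (inner ℝ v z : ℝ) ≤ inner ℝ v x1 := hmax hz
          linarith)
        (fun z hz => by
          rw [inner_sub_right, inner_sub_right]
          have : (inner ℝ v x2 : ℝ) ≤ inner ℝ v z := hmin hz
          linarith)
      have hlt := hv ((cFun s/2) • (x1 - x2))
        (Set.smul_mem_smul_set ⟨x1, hx1, x2, hx2, rfl⟩)
      rw [inner_smul_right, inner_sub_right] at hlt
      rw [inner_sub_right, inner_sub_right] at hcore
      have : cFun s / 2 * (inner ℝ v x1 - inner ℝ v t + -(inner ℝ v x2 - inner ℝ v t))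
        = cFun s / 2 * ((inner ℝ v x1 : ℝ) - inner ℝ v x2) := by ring
      linarith
  have hCCb : Metric.closedBall 0 ε ⊆ C - C := fun z hz => ⟨z, hCb hz, 0, h0C, by simp⟩
  have hw : r / cFun s ≤ inrad (K - K) (C - C) := by
    apply le_csSup (inrad_bdd _ _ (sub_compact hK.2.1) ε hε hCCb)
    refine ⟨by positivity, 0, ?_⟩
    rw [trans_sub_iff]
    rintro _ ⟨c1, h1, c2, h2, rfl⟩
    have hy := hC.1 h1 (hneg _ h2) (by norm_num : (0:ℝ) ≤ 1/2) (by norm_num : (0:ℝ) ≤ 1/2)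
      (by norm_num)
    obtain ⟨z, hz, e⟩ := hincl _ hy
    have : (r / cFun s) • (c1 - c2) + 0 = z := by
      simp only at e
      have e2 := congrArg (fun q => (2 / cFun s) • q) e
      simp only [smul_smul] at e2
      rw [show 2 / cFun s * (cFun s / 2) = 1 by field_simp, one_smul] at e2
      rw [e2]
      have : r / cFun s = (2 / cFun s * r) * (1/2) := by ring
      rw [this]
      module
    simpa only [this] using hz
  have hwpos : 0 < widthB K C := by
    unfold widthB
    have : 0 < r / cFun s := by positivity
    linarith
  rw [div_le_iff₀ hwpos]
  unfold widthB
  have h1 : r ≤ inrad (K - K) (C - C) * cFun s := (div_le_iff₀ hc0).1 hw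
  have h2 : D = (s+1) * r := by
    have : D = R + r := by linarith
    rw [this, ← hsr]; ring
  rw [h2]
  have := mul_le_mul_of_nonneg_left h1 (by linarith : 0 ≤ s + 1)
  linarith
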